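/- Let P and P̂ be two dynamics on the same countable state-action spaces, let π_D and π be two policies, and set ε_π := sup_{s∈S} D_TV(π_D(·|s), π(·|s)) and, for every t ≥ 1, ε_t^m := E_{(s,a)∼ν_{t-1}^{π,P̂}}[D_TV(P̂(·|s,a), P(·|s,a))] (the expected one-step model error at step t along trajectories generated by π in the model P̂). Then the gap between the true return and the model return satisfies |J_P(π) − J_{P̂}(π)| ≤ (2·R_max/(1−γ)²)·((2−γ)·ε_π + (1−γ)·Σ_{t=1}^∞ γ^t·ε_t^m). -/

import Mathlib

open scoped ENNReal

noncomputable section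

/-- Total variation distance between two probability mass functions on a countable type:
`D_TV(p, q) = (1/2) * Σ_x |p(x) - q(x)|`. -/
def tv {X : Type*} (p q : PMF X) : ℝ :=
  (1 / 2) * ∑' x : X, |(p x).toReal - (q x).toReal|

/-- The state-action distribution at time `t` under initial distribution `ρ0`, policy `π`
and dynamics `P`:  `ν_0(s,a) = ρ0(s)·π(a|s)` and
`ν_{t+1}(s',a') = Σ_{s,a} ν_t(s,a)·P(s'|s,a)·π(a'|s')`. -/
def nu {S A : Type*} (ρ0 : PMF S) (π : S → PMF A) (P : S × A → PMF S) : ℕ → PMF (S × A)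
  | 0 => ρ0.bind fun s => (π s).map fun a => (s, a)
  | (t + 1) => (nu ρ0 π P t).bind fun sa =>
      (P sa).bind fun s' => (π s').map fun a' => (s', a')

/-- The discounted return `J_P(π) = Σ_{t=0}^∞ γ^t · E_{(s,a)∼ν_t^{π,P}}[R(s,a)]`. -/
def J {S A : Type*} (R : S × A → ℝ) (γ : ℝ) (ρ0 : PMF S) (π : S → PMF A)
    (P : S × A → PMF S) : ℝ :=
  ∑' t : ℕ, γ ^ t * ∑' sa : S × A, ((nu ρ0 π P t) sa).toReal * R sa

/-!
As `P` and `Phat` are run with the same policy and the same initial distribution, their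
state-action distributions agree at time `0`, and the total variation distance between them grows
at each step by at most the expected one-step model error. Weighting this recursion by `γ ^ t` and
summing bounds the discounted sum of the distances by `(1 - γ)⁻¹` times that of the errors, and a
reward bounded by `Rmax` turns a distance `d` into a gap of at most `2 * Rmax * d`.
-/

section Expectation

variable {X Y : Type*} {f g : X → ℝ} {B C : ℝ}

theorem summable_toReal_pmf (p : PMF X) : Summable fun x => (p x).toReal :=
  ENNReal.summable_toReal p.tsum_coe_ne_top

theorem tsum_toReal_pmf (p : PMF X) : ∑' x, (p x).toReal = 1 := by
  rw [← ENNReal.tsum_toReal_eq p.apply_ne_top, p.tsum_coe, ENNReal.toReal_one]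

/-- The expectation of a real function under a probability mass function, as a real series. It has
the junk value `0` when the series is not summable; bounded functions are always summable. -/
def expectation (p : PMF X) (f : X → ℝ) : ℝ :=
  ∑' x, (p x).toReal * f x

theorem summable_toReal_mul (p : PMF X) (hf : ∀ x, |f x| ≤ C) :
    Summable fun x => (p x).toReal * f x := by
  refine Summable.of_norm_bounded ((summable_toReal_pmf p).mul_right C) fun x => ?_
  rw [norm_mul, Real.norm_of_nonneg ENNReal.toReal_nonneg]
  exact mul_le_mul_of_nonneg_left (hf x) ENNReal.toReal_nonneg

theorem expectation_const (p : PMF X) (c : ℝ) : expectation p (fun _ => c) = c := by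
  rw [expectation, tsum_mul_right, tsum_toReal_pmf, one_mul]

theorem expectation_const_mul (p : PMF X) (c : ℝ) (f : X → ℝ) :
    expectation p (fun x => c * f x) = c * expectation p f := by
  simp only [expectation, mul_left_comm _ c, tsum_mul_left]

theorem expectation_sub (p : PMF X) (hf : ∀ x, |f x| ≤ B) (hg : ∀ x, |g x| ≤ C) :
    expectation p (fun x => f x - g x) = expectation p f - expectation p g := by
  simp only [expectation, mul_sub]
  exact (summable_toReal_mul p hf).tsum_sub (summable_toReal_mul p hg)

theorem expectation_mono (p : PMF X) (hf : ∀ x, |f x| ≤ B) (hg : ∀ x, |g x| ≤ C)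
    (hfg : ∀ x, f x ≤ g x) : expectation p f ≤ expectation p g :=
  (summable_toReal_mul p hf).tsum_le_tsum
    (fun x => mul_le_mul_of_nonneg_left (hfg x) ENNReal.toReal_nonneg) (summable_toReal_mul p hg)

theorem abs_expectation_le (p : PMF X) (hf : ∀ x, |f x| ≤ C) : |expectation p f| ≤ C := by
  have hconst (c : ℝ) (x : X) : |(fun _ => c) x| ≤ |c| := le_rfl
  refine abs_le.mpr ⟨?_, ?_⟩
  · calc -C = expectation p (fun _ => -C) := (expectation_const p (-C)).symm
      _ ≤ expectation p f := expectation_mono p (hconst _) hf fun x => (abs_le.mp (hf x)).1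
  · calc expectation p f ≤ expectation p (fun _ => C) :=
          expectation_mono p hf (hconst _) fun x => (abs_le.mp (hf x)).2
      _ = C := expectation_const p C

theorem toReal_bind_apply (p : PMF X) (K : X → PMF Y) (y : Y) :
    (p.bind K y).toReal = ∑' x, (p x).toReal * (K x y).toReal := by
  simp only [PMF.bind_apply, ← ENNReal.toReal_mul]
  exact ENNReal.tsum_toReal_eq fun x => ENNReal.mul_ne_top (p.apply_ne_top x) ((K x).apply_ne_top y)

theorem summable_toReal_mul_toReal (p : PMF X) (K : X → PMF Y) :
    Summable fun z : X × Y => (p z.1).toReal * (K z.1 z.2).toReal := by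
  simp only [← ENNReal.toReal_mul]
  refine ENNReal.summable_toReal ?_
  rw [ENNReal.tsum_prod (f := fun x y => p x * K x y)]
  simp only [ENNReal.tsum_mul_left, PMF.tsum_coe, mul_one, ne_eq, ENNReal.one_ne_top,
    not_false_eq_true]

theorem expectation_bind (p : PMF X) (K : X → PMF Y) {h : Y → ℝ} (hh : ∀ y, |h y| ≤ C) :
    expectation (p.bind K) h = expectation p fun x => expectation (K x) h := by
  have hsummable : Summable fun z : X × Y => (p z.1).toReal * ((K z.1 z.2).toReal * h z.2) := by
    refine Summable.of_norm_bounded ((summable_toReal_mul_toReal p K).mul_right C) fun z => ?_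
    rw [← mul_assoc, norm_mul, Real.norm_of_nonneg (by positivity)]
    exact mul_le_mul_of_nonneg_left (hh z.2) (by positivity)
  calc expectation (p.bind K) h
      = ∑' y, ∑' x, (p x).toReal * ((K x y).toReal * h y) := by
        simp only [expectation, toReal_bind_apply, ← tsum_mul_right, mul_assoc]
    _ = ∑' x, ∑' y, (p x).toReal * ((K x y).toReal * h y) :=
        Summable.tsum_comm (f := fun x y => (p x).toReal * ((K x y).toReal * h y)) hsummable
    _ = expectation p fun x => expectation (K x) h := by
        simp only [expectation, tsum_mul_left]

end Expectation

section TotalVariation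

variable {X Y : Type*} {f : X → ℝ} {C : ℝ}

theorem tv_self (p : PMF X) : tv p p = 0 := by
  simp [tv]

theorem tv_nonneg (p q : PMF X) : 0 ≤ tv p q :=
  mul_nonneg (by norm_num) (tsum_nonneg fun _ => abs_nonneg _)

theorem abs_expectation_sub_expectation_le (p q : PMF X) (hf : ∀ x, |f x| ≤ C) :
    |expectation p f - expectation q f| ≤ 2 * C * tv p q := by
  have hdiff : Summable fun x => |(p x).toReal - (q x).toReal| :=
    ((summable_toReal_pmf p).sub (summable_toReal_pmf q)).abs
  have htv : 2 * C * tv p q = (∑' x, |(p x).toReal - (q x).toReal|) * C := by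
    rw [tv]; ring
  rw [htv, expectation, expectation,
    ← (summable_toReal_mul p hf).tsum_sub (summable_toReal_mul q hf), ← Real.norm_eq_abs]
  refine tsum_of_norm_bounded (hdiff.hasSum.mul_right C) fun x => ?_
  rw [← sub_mul, Real.norm_eq_abs, abs_mul]
  exact mul_le_mul_of_nonneg_left (hf x) (abs_nonneg _)

theorem exists_expectation_sub_expectation_eq_two_mul_tv (p q : PMF X) :
    ∃ f : X → ℝ, (∀ x, |f x| ≤ 1) ∧ expectation p f - expectation q f = 2 * tv p q := by
  let f (x : X) : ℝ := SignType.sign ((p x).toReal - (q x).toReal)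
  have hf (x : X) : |f x| ≤ 1 := by
    rcases (SignType.sign ((p x).toReal - (q x).toReal)).trichotomy with h | h | h <;> simp [f, h]
  refine ⟨f, hf, ?_⟩
  rw [expectation, expectation,
    ← (summable_toReal_mul p hf).tsum_sub (summable_toReal_mul q hf)]
  simp only [f, ← sub_mul, self_mul_sign, tv]
  ring

theorem tv_le_one (p q : PMF X) : tv p q ≤ 1 := by
  obtain ⟨f, hf, hfpq⟩ := exists_expectation_sub_expectation_eq_two_mul_tv p q
  have hp := (abs_le.mp (abs_expectation_le p hf)).2
  have hq := (abs_le.mp (abs_expectation_le q hf)).1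
  linarith

theorem abs_tv_le_one (p q : PMF X) : |tv p q| ≤ 1 :=
  (abs_of_nonneg (tv_nonneg p q)).trans_le (tv_le_one p q)

-- Test both mixtures against the function attaining their distance, and change kernel before
-- changing the mixing distribution.
theorem tv_bind_le (p q : PMF X) (K L : X → PMF Y) :
    tv (p.bind K) (q.bind L) ≤ tv p q + expectation p fun x => tv (K x) (L x) := by
  obtain ⟨f, hf, hfKL⟩ := exists_expectation_sub_expectation_eq_two_mul_tv (p.bind K) (q.bind L)
  have hK (x : X) : |expectation (K x) f| ≤ 1 := abs_expectation_le (K x) hf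
  have hL (x : X) : |expectation (L x) f| ≤ 1 := abs_expectation_le (L x) hf
  have hkernel (x : X) : |expectation (K x) f - expectation (L x) f| ≤ 2 * tv (K x) (L x) := by
    simpa only [mul_one] using abs_expectation_sub_expectation_le (K x) (L x) hf
  have htwo (x : X) : 2 * tv (K x) (L x) ≤ 2 := by linarith [tv_le_one (K x) (L x)]
  have habs (x : X) : |2 * tv (K x) (L x)| ≤ 2 :=
    (abs_of_nonneg (mul_nonneg zero_le_two (tv_nonneg _ _))).trans_le (htwo x)
  have hchange_kernel :
      (expectation p fun x => expectation (K x) f) - (expectation p fun x => expectation (L x) f)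
        ≤ 2 * expectation p fun x => tv (K x) (L x) := by
    rw [← expectation_sub p hK hL, ← expectation_const_mul]
    exact expectation_mono p (fun x => (hkernel x).trans (htwo x)) habs
      fun x => (le_abs_self _).trans (hkernel x)
  have hchange_mixing :
      (expectation p fun x => expectation (L x) f) - (expectation q fun x => expectation (L x) f)
        ≤ 2 * tv p q := by
    simpa only [mul_one] using
      (le_abs_self _).trans (abs_expectation_sub_expectation_le p q hL)
  rw [expectation_bind p K hf, expectation_bind q L hf] at hfKL
  linarith

theorem tv_bind_le_of_same_kernel (p q : PMF X) (K : X → PMF Y) :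
    tv (p.bind K) (q.bind K) ≤ tv p q := by
  simpa only [tv_self, expectation_const, add_zero] using tv_bind_le p q K K

end TotalVariation

section DiscountedSum

variable {γ C : ℝ}

theorem summable_pow_mul_of_abs_le {u : ℕ → ℝ} (hγ0 : 0 ≤ γ) (hγ1 : γ < 1)
    (hu : ∀ t, |u t| ≤ C) : Summable fun t => γ ^ t * u t := by
  refine Summable.of_norm_bounded ((summable_geometric_of_lt_one hγ0 hγ1).mul_right C) fun t => ?_
  rw [norm_mul, Real.norm_of_nonneg (pow_nonneg hγ0 t)]
  exact mul_le_mul_of_nonneg_left (hu t) (pow_nonneg hγ0 t)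

theorem one_sub_mul_tsum_pow_mul_le {d e : ℕ → ℝ} (hγ0 : 0 ≤ γ)
    (hd : Summable fun t => γ ^ t * d t) (he : Summable fun t => γ ^ (t + 1) * e t)
    (hde : ∀ t, d (t + 1) ≤ d t + e t) :
    (1 - γ) * ∑' t, γ ^ t * d t ≤ d 0 + ∑' t, γ ^ (t + 1) * e t := by
  have hshift : ∑' t, γ ^ t * d t = d 0 + ∑' t, γ ^ (t + 1) * d (t + 1) := by
    simpa only [pow_zero, one_mul] using hd.tsum_eq_zero_add
  have hsum : ∑' t, γ ^ (t + 1) * d (t + 1) ≤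
      γ * (∑' t, γ ^ t * d t) + ∑' t, γ ^ (t + 1) * e t := by
    rw [← tsum_mul_left, ← (hd.mul_left γ).tsum_add he]
    refine ((summable_nat_add_iff 1).mpr hd).tsum_le_tsum (fun t => ?_) ((hd.mul_left γ).add he)
    calc γ ^ (t + 1) * d (t + 1) ≤ γ ^ (t + 1) * (d t + e t) :=
          mul_le_mul_of_nonneg_left (hde t) (pow_nonneg hγ0 _)
      _ = γ * (γ ^ t * d t) + γ ^ (t + 1) * e t := by ring
  linarith

end DiscountedSum

section ModelError

variable {S A : Type*} {γ : ℝ}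

/-- The one-step error of the model `Phat` against the dynamics `P`, averaged over the state-action
distribution at time `t` of `π` in the model: the paper's `ε_{t+1}^m`, with the index shifted. -/
def modelError (ρ0 : PMF S) (π : S → PMF A) (P Phat : S × A → PMF S) (t : ℕ) : ℝ :=
  expectation (nu ρ0 π Phat t) fun sa => tv (Phat sa) (P sa)

theorem tv_nu_succ_le (ρ0 : PMF S) (π : S → PMF A) (P Phat : S × A → PMF S) (t : ℕ) :
    tv (nu ρ0 π Phat (t + 1)) (nu ρ0 π P (t + 1)) ≤
      tv (nu ρ0 π Phat t) (nu ρ0 π P t) + modelError ρ0 π P Phat t := by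
  refine (tv_bind_le _ _ _ _).trans (add_le_add_right ?_ _)
  exact expectation_mono _ (fun _ => abs_tv_le_one _ _) (fun _ => abs_tv_le_one _ _)
    fun _ => tv_bind_le_of_same_kernel _ _ _

theorem one_sub_mul_tsum_pow_mul_tv_nu_le (hγ0 : 0 ≤ γ) (hγ1 : γ < 1) (ρ0 : PMF S)
    (π : S → PMF A) (P Phat : S × A → PMF S) :
    (1 - γ) * ∑' t, γ ^ t * tv (nu ρ0 π Phat t) (nu ρ0 π P t) ≤
      ∑' t, γ ^ (t + 1) * modelError ρ0 π P Phat t := by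
  have herror : Summable fun t => γ ^ (t + 1) * modelError ρ0 π P Phat t := by
    simp only [pow_succ', mul_assoc]
    exact (summable_pow_mul_of_abs_le hγ0 hγ1 fun t =>
      abs_expectation_le _ fun _ => abs_tv_le_one _ _).mul_left γ
  have hinit : tv (nu ρ0 π Phat 0) (nu ρ0 π P 0) = 0 := tv_self _
  simpa only [hinit, zero_add] using one_sub_mul_tsum_pow_mul_le hγ0
    (summable_pow_mul_of_abs_le hγ0 hγ1 fun _ => abs_tv_le_one _ _) herror
    (tv_nu_succ_le ρ0 π P Phat)

theorem abs_J_sub_J_le {R : S × A → ℝ} {Rmax : ℝ} (hR : ∀ sa, |R sa| ≤ Rmax) (hγ0 : 0 ≤ γ)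
    (hγ1 : γ < 1) (ρ ρ' : PMF S) (π π' : S → PMF A) (P P' : S × A → PMF S) :
    |J R γ ρ π P - J R γ ρ' π' P'| ≤
      2 * Rmax * ∑' t, γ ^ t * tv (nu ρ π P t) (nu ρ' π' P' t) := by
  have hreturn (ρ : PMF S) (π : S → PMF A) (P : S × A → PMF S) :
      Summable fun t => γ ^ t * expectation (nu ρ π P t) R :=
    summable_pow_mul_of_abs_le hγ0 hγ1 fun t => abs_expectation_le _ hR
  have hdist : Summable fun t => γ ^ t * tv (nu ρ π P t) (nu ρ' π' P' t) :=
    summable_pow_mul_of_abs_le hγ0 hγ1 fun t => abs_tv_le_one _ _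
  have hgap : J R γ ρ π P - J R γ ρ' π' P' =
      ∑' t, γ ^ t * (expectation (nu ρ π P t) R - expectation (nu ρ' π' P' t) R) := by
    simp only [mul_sub]
    exact ((hreturn ρ π P).tsum_sub (hreturn ρ' π' P')).symm
  rw [hgap, ← Real.norm_eq_abs]
  refine tsum_of_norm_bounded (hdist.hasSum.mul_left (2 * Rmax)) fun t => ?_
  rw [norm_mul, Real.norm_of_nonneg (pow_nonneg hγ0 t), mul_left_comm]
  exact mul_le_mul_of_nonneg_left (abs_expectation_sub_expectation_le _ _ hR) (pow_nonneg hγ0 t)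

end ModelError

theorem return_gap_bound_general {S A : Type*} (P Phat : S × A → PMF S) (π : S → PMF A)
    (R : S × A → ℝ) (Rmax : ℝ) (hR : ∀ sa, |R sa| ≤ Rmax)
    (γ : ℝ) (hγ0 : 0 ≤ γ) (hγ1 : γ < 1) (ρ0 : PMF S) :
    |J R γ ρ0 π P - J R γ ρ0 π Phat| ≤
      2 * Rmax / (1 - γ) * ∑' t, γ ^ (t + 1) * modelError ρ0 π P Phat t := by
  have hRmax : 0 ≤ Rmax := (abs_nonneg _).trans (abs_expectation_le (nu ρ0 π P 0) hR)
  have hγ : 0 < 1 - γ := sub_pos.mpr hγ1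
  calc |J R γ ρ0 π P - J R γ ρ0 π Phat|
      = |J R γ ρ0 π Phat - J R γ ρ0 π P| := abs_sub_comm _ _
    _ ≤ 2 * Rmax * ∑' t, γ ^ t * tv (nu ρ0 π Phat t) (nu ρ0 π P t) :=
        abs_J_sub_J_le hR hγ0 hγ1 ρ0 ρ0 π π Phat P
    _ = 2 * Rmax / (1 - γ) *
          ((1 - γ) * ∑' t, γ ^ t * tv (nu ρ0 π Phat t) (nu ρ0 π P t)) := by
        field_simp
    _ ≤ 2 * Rmax / (1 - γ) * ∑' t, γ ^ (t + 1) * modelError ρ0 π P Phat t :=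
        mul_le_mul_of_nonneg_left (one_sub_mul_tsum_pow_mul_tv_nu_le hγ0 hγ1 ρ0 π P Phat)
          (by positivity)

/-- **Theorem 1 of the paper.**  The gap between the true return and the model return is
bounded by `(2·R_max/(1-γ)²)·((2-γ)·ε_π + (1-γ)·Σ_{t≥1} γ^t·ε_t^m)`. -/
theorem return_gap_bound {S A : Type*} [Countable S] [Countable A]
    (P Phat : S × A → PMF S) (πD π : S → PMF A)
    (R : S × A → ℝ) (Rmax : ℝ) (hR : ∀ sa : S × A, |R sa| ≤ Rmax)
    (γ : ℝ) (hγ0 : 0 ≤ γ) (hγ1 : γ < 1) (ρ0 : PMF S)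
    (επ : ℝ) (hεπ : επ = ⨆ s : S, tv (πD s) (π s))
    (εm : ℕ → ℝ)
    (hεm : ∀ t : ℕ, εm (t + 1) =
      ∑' sa : S × A, ((nu ρ0 π Phat t) sa).toReal * tv (Phat sa) (P sa)) :
    |J R γ ρ0 π P - J R γ ρ0 π Phat| ≤
      2 * Rmax / (1 - γ) ^ 2 *
        ((2 - γ) * επ + (1 - γ) * ∑' t : ℕ, γ ^ (t + 1) * εm (t + 1)) := by
  have hRmax : 0 ≤ Rmax := (abs_nonneg _).trans (abs_expectation_le (nu ρ0 π P 0) hR)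
  have hγ : 0 < 1 - γ := sub_pos.mpr hγ1
  have hεπ0 : 0 ≤ (2 - γ) * επ :=
    mul_nonneg (by linarith) (hεπ ▸ Real.iSup_nonneg fun s => tv_nonneg (πD s) (π s))
  have hmodel (t : ℕ) : εm (t + 1) = modelError ρ0 π P Phat t := hεm t
  calc |J R γ ρ0 π P - J R γ ρ0 π Phat|
      ≤ 2 * Rmax / (1 - γ) * ∑' t, γ ^ (t + 1) * εm (t + 1) := by
        simpa only [hmodel] using return_gap_bound_general P Phat π R Rmax hR γ hγ0 hγ1 ρ0
    _ = 2 * Rmax / (1 - γ) ^ 2 * ((1 - γ) * ∑' t, γ ^ (t + 1) * εm (t + 1)) := by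
        field_simp
    _ ≤ 2 * Rmax / (1 - γ) ^ 2 * ((2 - γ) * επ + (1 - γ) * ∑' t, γ ^ (t + 1) * εm (t + 1)) :=
        mul_le_mul_of_nonneg_left (le_add_of_nonneg_left hεπ0) (by positivity)
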